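/- The new 6-point kernel vanishes to third order at the endpoint of its support: p₋₃(0) = 0, and the first, second, and third derivatives of p₋₃ (taken within the interval [0,1]) at r = 0 are all equal to 0. Consequently φ(x) together with its first three one-sided derivatives tend to 0 as x decreases to −3, matching the identically-zero values of φ on (−∞, −3). -/

import Mathlib

noncomputable section

namespace IB6

/-- The special second-moment constant `K = 59/60 − √29/20`. -/
def K : ℝ := 59 / 60 - Real.sqrt 29 / 20

/-- `α = 28`. -/
def a : ℝ := 28

/-- `β(r)`. -/
def b (r : ℝ) : ℝ :=
  9 / 4 - (3 / 2) * (K + r ^ 2) * r + (22 / 3 - 7 * K) * r - (7 / 3) * r ^ 3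

/-- `γ(r)`. -/
def c (r : ℝ) : ℝ :=
  -(11 / 32) * r ^ 2 + (3 / 32) * (2 * K + r ^ 2) * r ^ 2
    + (1 / 72) * ((3 * K - 1) * r + r ^ 3) ^ 2
    + (1 / 18) * ((4 - 3 * K) * r - r ^ 3) ^ 2

/-- `p₋₃(r) = (−β(r) + √(β(r)² − 4αγ(r)))/(2α)`. -/
def pm3 (r : ℝ) : ℝ := (-b r + Real.sqrt (b r ^ 2 - 4 * a * c r)) / (2 * a)

/-- `p₋₂(r)`. -/
def pm2 (r : ℝ) : ℝ :=
  -3 * pm3 r - 1 / 16 + (K + r ^ 2) / 8 + (3 * K - 1) * r / 12 + r ^ 3 / 12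

/-- `p₋₁(r)`. -/
def pm1 (r : ℝ) : ℝ := 2 * pm3 r + 1 / 4 + (4 - 3 * K) * r / 6 - r ^ 3 / 6

/-- `p₀(r)`. -/
def p0 (r : ℝ) : ℝ := 2 * pm3 r + 5 / 8 - (K + r ^ 2) / 4

/-- `p₁(r)`. -/
def p1 (r : ℝ) : ℝ := -3 * pm3 r + 1 / 4 - (4 - 3 * K) * r / 6 + r ^ 3 / 6

/-- `p₂(r)`. -/
def p2 (r : ℝ) : ℝ :=
  pm3 r - 1 / 16 + (K + r ^ 2) / 8 - (3 * K - 1) * r / 12 - r ^ 3 / 12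

/-- The new 6-point immersed-boundary kernel `φ`. -/
def phi (x : ℝ) : ℝ :=
  if -3 ≤ x ∧ x < -2 then pm3 (x - (-3))
  else if -2 ≤ x ∧ x < -1 then pm2 (x - (-2))
  else if -1 ≤ x ∧ x < 0 then pm1 (x - (-1))
  else if 0 ≤ x ∧ x < 1 then p0 (x - 0)
  else if 1 ≤ x ∧ x < 2 then p1 (x - 1)
  else if 2 ≤ x ∧ x < 3 then p2 (x - 2)
  else 0

/-!
The constant `K` is a root of `180 K² - 354 K + 161`, which is exactly the condition that the `r²`
coefficient of `γ` vanishes; since `γ` is even, `γ(r) = r⁴ q(r)` with `q` a polynomial. Multiplying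
by the conjugate,
  `p₋₃ = (-β + √(β² - 4αγ)) / (2α) = -2γ / (β + √(β² - 4αγ))`,
and the last denominator is smooth and nonzero near `r = 0` because `β(0) = 9/4 > 0`. Hence `p₋₃` is
`r⁴` times a smooth function near `0`.
-/

open Filter Topology

section PowerFactor

variable {𝕜 F : Type*} [NontriviallyNormedField 𝕜] [NormedAddCommGroup F] [NormedSpace 𝕜 F]
  {s : Set 𝕜} {x₀ : 𝕜} {k n : ℕ}

lemma iteratedDerivWithin_sub_pow_self_eq_zero (hs : UniqueDiffOn 𝕜 s) (hx₀ : x₀ ∈ s)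
    (hkn : k < n) : iteratedDerivWithin k (fun x ↦ (x - x₀) ^ n) s x₀ = 0 := by
  rw [iteratedDerivWithin_eq_iteratedDeriv hs (by fun_prop) hx₀,
    iteratedDeriv_comp_sub_const k (fun x ↦ x ^ n) x₀]
  simp [Nat.sub_ne_zero_of_lt hkn]

lemma iteratedDerivWithin_sub_pow_smul_self_eq_zero {g : 𝕜 → F} (hs : UniqueDiffOn 𝕜 s)
    (hx₀ : x₀ ∈ s) (hg : ContDiffWithinAt 𝕜 k g s x₀) (hkn : k < n) :
    iteratedDerivWithin k (fun x ↦ (x - x₀) ^ n • g x) s x₀ = 0 := by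
  have hpow : ContDiffWithinAt 𝕜 k (fun x ↦ (x - x₀) ^ n) s x₀ := by fun_prop
  refine (iteratedDerivWithin_smul hx₀ hs hpow hg).trans (Finset.sum_eq_zero fun i hi ↦ ?_)
  have hin : i < n := (Nat.lt_succ_iff.mp (Finset.mem_range.mp hi)).trans_lt hkn
  rw [iteratedDerivWithin_sub_pow_self_eq_zero hs hx₀ hin, zero_smul, smul_zero]

end PowerFactor

section QuadraticRoot

/-- The root `(-b + √(b² - 4ac)) / (2a)` of `a x² + b x + c`, the one near `-c / b` when
`0 < b` and `c` is small. The value is junk if `a = 0` or the discriminant is negative. -/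
def quadraticRoot (a b c : ℝ) : ℝ := (-b + √(discrim a b c)) / (2 * a)

lemma quadraticRoot_eq_neg_two_mul_div {a b c : ℝ} (ha : a ≠ 0) (hb : 0 < b)
    (hdiscrim : 0 ≤ discrim a b c) :
    quadraticRoot a b c = -2 * c / (b + √(discrim a b c)) := by
  have hsqrt : √(discrim a b c) ^ 2 = b ^ 2 - 4 * a * c := Real.sq_sqrt hdiscrim
  have hdenom : b + √(discrim a b c) ≠ 0 := by positivity
  rw [quadraticRoot, div_eq_div_iff (mul_ne_zero two_ne_zero ha) hdenom]
  linear_combination hsqrt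

lemma quadraticRoot_eventuallyEq_neg_two_mul_div {X : Type*} [TopologicalSpace X]
    {a b c : X → ℝ} {s : Set X} {x₀ : X} (ha : ContinuousWithinAt a s x₀)
    (hb : ContinuousWithinAt b s x₀) (hc : ContinuousWithinAt c s x₀) (ha₀ : a x₀ ≠ 0)
    (hb₀ : 0 < b x₀) (hdiscrim : 0 < discrim (a x₀) (b x₀) (c x₀)) :
    (fun x ↦ quadraticRoot (a x) (b x) (c x)) =ᶠ[𝓝[s] x₀]
      fun x ↦ -2 * c x / (b x + √(discrim (a x) (b x) (c x))) := by
  have hdiscrim_cont : ContinuousWithinAt (fun x ↦ discrim (a x) (b x) (c x)) s x₀ := by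
    simp only [discrim]
    fun_prop
  filter_upwards [ha.eventually_ne ha₀, hb.eventually_const_lt hb₀,
    hdiscrim_cont.eventually_const_lt hdiscrim] with x hax hbx hdx
  exact quadraticRoot_eq_neg_two_mul_div hax hbx hdx.le

variable {a b c q : ℝ → ℝ} {s : Set ℝ} {x₀ : ℝ} {k n : ℕ}

theorem iteratedDerivWithin_quadraticRoot_eq_zero (hs : UniqueDiffOn ℝ s) (hx₀ : x₀ ∈ s)
    (ha : ContDiffWithinAt ℝ k a s x₀) (hb : ContDiffWithinAt ℝ k b s x₀)
    (hq : ContDiffWithinAt ℝ k q s x₀) (ha₀ : a x₀ ≠ 0) (hb₀ : 0 < b x₀)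
    (hcq : ∀ x ∈ s, c x = (x - x₀) ^ n * q x) (hkn : k < n) :
    iteratedDerivWithin k (fun x ↦ quadraticRoot (a x) (b x) (c x)) s x₀ = 0 := by
  have hc : ContDiffWithinAt ℝ k c s x₀ := by
    have hpow_mul : ContDiffWithinAt ℝ k (fun x ↦ (x - x₀) ^ n * q x) s x₀ := by fun_prop
    exact hpow_mul.congr hcq (hcq x₀ hx₀)
  have hc₀ : c x₀ = 0 := by simp [hcq x₀ hx₀, Nat.ne_zero_of_lt hkn]
  have hdiscrim₀ : 0 < discrim (a x₀) (b x₀) (c x₀) := by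
    rw [discrim, hc₀, mul_zero, sub_zero]
    positivity
  have hdiscrim : ContDiffWithinAt ℝ k (fun x ↦ discrim (a x) (b x) (c x)) s x₀ := by
    simp only [discrim]
    fun_prop
  have hdenom₀ : b x₀ + √(discrim (a x₀) (b x₀) (c x₀)) ≠ 0 := by positivity
  have hcofactor : ContDiffWithinAt ℝ k
      (fun x ↦ -2 * q x / (b x + √(discrim (a x) (b x) (c x)))) s x₀ :=
    (contDiffWithinAt_const.mul hq).div (hb.add (hdiscrim.sqrt hdiscrim₀.ne')) hdenom₀
  have hfactor : (fun x ↦ quadraticRoot (a x) (b x) (c x)) =ᶠ[𝓝[s] x₀]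
      fun x ↦ (x - x₀) ^ n • (-2 * q x / (b x + √(discrim (a x) (b x) (c x)))) := by
    filter_upwards [quadraticRoot_eventuallyEq_neg_two_mul_div ha.continuousWithinAt
      hb.continuousWithinAt hc.continuousWithinAt ha₀ hb₀ hdiscrim₀, self_mem_nhdsWithin]
      with x hx hxs
    rw [hx, smul_eq_mul, ← mul_div_assoc]
    congr 1
    linear_combination -2 * hcq x hxs
  rw [hfactor.iteratedDerivWithin_eq (hfactor.self_of_nhdsWithin hx₀)]
  exact iteratedDerivWithin_sub_pow_smul_self_eq_zero hs hx₀ hcofactor hkn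

end QuadraticRoot

lemma K_quadratic_eq_zero : 180 * K ^ 2 - 354 * K + 161 = 0 := by
  have hsqrt : √29 ^ 2 = (29 : ℝ) := Real.sq_sqrt (by norm_num)
  unfold K
  linear_combination (9 / 20) * hsqrt

lemma c_eq_pow_four_mul (r : ℝ) :
    c r = r ^ 4 * (5 / 72 * r ^ 2 + (5 / 12 * K - 109 / 288)) := by
  unfold c
  linear_combination (r ^ 2 / 288) * K_quadratic_eq_zero

lemma contDiff_b {n : WithTop ℕ∞} : ContDiff ℝ n b := by
  unfold b
  fun_prop

lemma continuous_pm3 : Continuous pm3 := by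
  unfold pm3 b c
  fun_prop

lemma iteratedDerivWithin_pm3_zero_eq_zero {s : Set ℝ} {k : ℕ} (hs : UniqueDiffOn ℝ s)
    (hmem : 0 ∈ s) (hk : k < 4) : iteratedDerivWithin k pm3 s 0 = 0 := by
  have hcq : ∀ r ∈ s, c r = (r - 0) ^ 4 * (5 / 72 * r ^ 2 + (5 / 12 * K - 109 / 288)) :=
    fun r _ ↦ by rw [sub_zero, c_eq_pow_four_mul]
  have hroot : pm3 = fun r ↦ quadraticRoot a (b r) (c r) := rfl
  rw [hroot]
  exact iteratedDerivWithin_quadraticRoot_eq_zero (a := fun _ ↦ a) hs hmem contDiffWithinAt_const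
    contDiff_b.contDiffWithinAt (by fun_prop) (by norm_num [a]) (by norm_num [b]) hcq hk

lemma pm3_zero : pm3 0 = 0 := by
  simpa using iteratedDerivWithin_pm3_zero_eq_zero uniqueDiffOn_univ (Set.mem_univ 0) zero_lt_four

lemma phi_eq_pm3_of_mem_Ico {x : ℝ} (hx : x ∈ Set.Ico (-3) (-2)) : phi x = pm3 (x - -3) :=
  if_pos hx

lemma phi_eq_zero_of_lt {x : ℝ} (hx : x < -3) : phi x = 0 := by
  unfold phi
  repeat rw [if_neg (by rintro ⟨hle, -⟩; linarith)]

lemma tendsto_phi_nhdsGT : Tendsto phi (𝓝[>] (-3)) (𝓝 0) := by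
  have hcont : Continuous fun x : ℝ ↦ pm3 (x - -3) := continuous_pm3.comp (by fun_prop)
  have hlim : Tendsto (fun x : ℝ ↦ pm3 (x - -3)) (𝓝[>] (-3)) (𝓝 0) :=
    tendsto_nhdsWithin_of_tendsto_nhds (hcont.tendsto' _ _ (by rw [sub_self, pm3_zero]))
  refine hlim.congr' ?_
  filter_upwards [Ioo_mem_nhdsGT (show (-3 : ℝ) < -2 by norm_num)] with x hx
  exact (phi_eq_pm3_of_mem_Ico (Set.Ioo_subset_Ico_self hx)).symm

/-- The kernel vanishes to third order at the endpoint of its support: `p₋₃(0) = 0` and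
the first three derivatives of `p₋₃` within `[0,1]` vanish at `r = 0`; consequently
`φ(x) → 0` as `x` decreases to `−3`, matching the zero values of `φ` on `(−∞, −3)`. -/
theorem new6pt_vanishes_third_order :
    pm3 0 = 0 ∧
    iteratedDerivWithin 1 pm3 (Set.Icc 0 1) 0 = 0 ∧
    iteratedDerivWithin 2 pm3 (Set.Icc 0 1) 0 = 0 ∧
    iteratedDerivWithin 3 pm3 (Set.Icc 0 1) 0 = 0 ∧
    Filter.Tendsto phi (nhdsWithin (-3) (Set.Ioi (-3))) (nhds 0) ∧
    (∀ x : ℝ, x < -3 → phi x = 0) := by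
  have hderiv (k : ℕ) (hk : k < 4) : iteratedDerivWithin k pm3 (Set.Icc 0 1) 0 = 0 :=
    iteratedDerivWithin_pm3_zero_eq_zero (uniqueDiffOn_Icc zero_lt_one) (by simp) hk
  exact ⟨pm3_zero, hderiv 1 (by norm_num), hderiv 2 (by norm_num), hderiv 3 (by norm_num),
    tendsto_phi_nhdsGT, fun _ ↦ phi_eq_zero_of_lt⟩

end IB6
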